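/- For every fixed integer n ≥ 3, if P is a polynomial with rational coefficients such that P(r) = S_n(r) for every natural number r, then P(−k) = 0 for every integer k with 1 ≤ k ≤ n − 2. -/

import Mathlib

/-- `S n r` is the number of `n × n` matrices with nonnegative integer entries,
all diagonal entries zero, and every row sum and every column sum equal to `r`. -/
noncomputable def S (n r : ℕ) : ℕ :=
  Nat.card {M : Matrix (Fin n) (Fin n) ℕ //
    (∀ i, M i i = 0) ∧ (∀ i, ∑ j, M i j = r) ∧ (∀ j, ∑ i, M i j = r)}

/-!
Call a set of positions a support, and count the nonnegative integer matrices with a given support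
and all row and column sums `r`. If the support contains the graph of a permutation `σ`, then
subtracting the permutation matrix identifies the matrices with line sums `r` that vanish nowhere on
this graph with all those with line sums `r - 1`, so by inclusion-exclusion the first difference of
the count is a signed sum of counts for smaller supports. If these are polynomial for `r ≥ a + 1`,
then summing the difference makes the count itself polynomial for `r ≥ a`. A support containing no
permutation graph admits no matrix with positive line sums, by Birkhoff's theorem, so every count is
polynomial for `r ≥ 1`. If the support contains `m` pairwise disjoint permutation graphs, then
deleting positions of one of them leaves the other `m - 1` intact, so by induction the count is
polynomial for `r ≥ 1 - m`. For negative `r` it is zero. The off-diagonal positions are the disjoint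
union of the graphs of the `n - 1` nontrivial cyclic shifts.
-/

open Finset Polynomial

section PolynomialFrom

variable {R : Type*} [CommRing R]

variable (R) in
/-- The functions on the integers that agree with a polynomial on the half-line `r ≥ a`, as a
submodule so that alternating sums of such functions stay in it. -/
def polynomialFrom (a : ℤ) : Submodule R (ℤ → R) where
  carrier := {f | ∃ p : R[X], ∀ r : ℤ, a ≤ r → f r = p.eval (r : R)}
  zero_mem' := ⟨0, by simp⟩
  add_mem' := by
    rintro f g ⟨p, hp⟩ ⟨q, hq⟩
    exact ⟨p + q, fun r hr => by simp [hp r hr, hq r hr]⟩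
  smul_mem' := by
    rintro c f ⟨p, hp⟩
    exact ⟨C c * p, fun r hr => by simp [hp r hr]⟩

theorem polynomialFrom_mono : Monotone (polynomialFrom R) := by
  rintro a b hab f ⟨p, hp⟩
  exact ⟨p, fun r hr => hp r (hab.trans hr)⟩

theorem comp_add_one_mem_polynomialFrom {a : ℤ} {f : ℤ → R} (hf : f ∈ polynomialFrom R (a + 1)) :
    (fun r => f (r + 1)) ∈ polynomialFrom R a := by
  obtain ⟨p, hp⟩ := hf
  exact ⟨p.comp (X + 1), fun r hr => by simp [hp (r + 1) (by omega)]⟩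

theorem eval_eq_of_mem_polynomialFrom [IsDomain R] [CharZero R] {a : ℤ} {f : ℤ → R}
    (hf : f ∈ polynomialFrom R a) {P : R[X]} (hP : ∀ r : ℕ, P.eval (r : R) = f r)
    {r : ℤ} (hr : a ≤ r) : P.eval (r : R) = f r := by
  obtain ⟨p, hp⟩ := hf
  have heval (k : ℕ) (hk : a.toNat ≤ k) : P.eval (k : R) = p.eval (k : R) := by
    rw [hP, hp k (by omega), Int.cast_natCast]
  have hinf : ((↑) '' Set.Ici a.toNat : Set R).Infinite :=
    (Set.Ici_infinite _).image Nat.cast_injective.injOn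
  have hPp : P = p :=
    eq_of_infinite_eval_eq P p <| hinf.mono <| Set.image_subset_iff.2 heval
  rw [hPp, hp r hr]

theorem exists_comp_one_add_X_sub_eq [Algebra ℚ R] (q : R[X]) :
    ∃ p : R[X], p.comp (1 + X) - p = q := by
  induction q using Polynomial.induction_on' with
  | add q₁ q₂ h₁ h₂ =>
    obtain ⟨p₁, rfl⟩ := h₁
    obtain ⟨p₂, rfl⟩ := h₂
    exact ⟨p₁ + p₂, by rw [add_comp]; ring⟩
  | monomial m c =>
    let b : R[X] := (Polynomial.bernoulli (m + 1)).map (algebraMap ℚ R)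
    have hb : b.comp (1 + X) - b = ((m + 1 : ℕ) : R[X]) * X ^ m := by
      have h := congrArg (Polynomial.map (algebraMap ℚ R)) (bernoulli_comp_one_add_X (m + 1))
      rw [Polynomial.map_comp] at h
      simp only [Polynomial.map_add, Polynomial.map_one, map_X, nsmul_eq_mul,
        Polynomial.map_mul, Polynomial.map_natCast, Polynomial.map_pow, Nat.add_sub_cancel] at h
      rw [sub_eq_iff_eq_add', h]
    have hinv : algebraMap ℚ R (m + 1 : ℚ)⁻¹ * (m + 1 : ℕ) = 1 := by
      rw [← map_natCast (algebraMap ℚ R), ← map_mul, Nat.cast_succ,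
        inv_mul_cancel₀ (by positivity), map_one]
    refine ⟨C (c * algebraMap ℚ R (m + 1 : ℚ)⁻¹) * b, ?_⟩
    rw [mul_comp, C_comp, ← mul_sub, hb, ← mul_assoc, ← C_eq_natCast, ← C_mul, mul_assoc, hinv,
      mul_one, C_mul_X_pow_eq_monomial]

theorem mem_polynomialFrom_of_fwdDiff [Algebra ℚ R] {a : ℤ} {f : ℤ → R}
    (hf : fwdDiff 1 f ∈ polynomialFrom R a) : f ∈ polynomialFrom R a := by
  obtain ⟨q, hq⟩ := hf
  obtain ⟨p, rfl⟩ := exists_comp_one_add_X_sub_eq q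
  refine ⟨p + C (f a - p.eval (a : R)), fun r hr => ?_⟩
  induction r, hr using Int.leInduction with
  | base => simp
  | succ r hr ih =>
    have hstep := hq r hr
    simp only [fwdDiff, eval_sub, eval_add, eval_comp, eval_one, eval_X, eval_C,
      add_comm (1 : R)] at hstep ih ⊢
    push_cast
    linear_combination hstep + ih

end PolynomialFrom

section LineSums

variable {ι : Type*} [Fintype ι]

/-- `HasLineSums E r M` says that the matrix `M` is supported in `E` and has all row and column
sums equal to `r`. Negative `r` is allowed, so that the number of such matrices is a function
on the integers. -/
structure HasLineSums (E : Finset (ι × ι)) (r : ℤ) (M : Matrix ι ι ℕ) : Prop where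
  mem_of_ne_zero : ∀ ⦃i j⦄, M i j ≠ 0 → (i, j) ∈ E
  row_sum : ∀ i, ∑ j, (M i j : ℤ) = r
  col_sum : ∀ j, ∑ i, (M i j : ℤ) = r

namespace HasLineSums

variable {E : Finset (ι × ι)} {r s : ℤ} {M N : Matrix ι ι ℕ}

theorem add (hM : HasLineSums E r M) (hN : HasLineSums E s N) : HasLineSums E (r + s) (M + N) where
  mem_of_ne_zero i j h := by
    by_cases hMij : M i j = 0
    · exact hN.mem_of_ne_zero fun hNij => h (by simp [hMij, hNij])
    · exact hM.mem_of_ne_zero hMij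
  row_sum i := by simp [sum_add_distrib, hM.row_sum, hN.row_sum]
  col_sum j := by simp [sum_add_distrib, hM.col_sum, hN.col_sum]

theorem of_add (hMN : HasLineSums E (r + s) (M + N)) (hN : HasLineSums E s N) :
    HasLineSums E r M where
  mem_of_ne_zero i j h := hMN.mem_of_ne_zero (by simp [h])
  row_sum i := by simpa [sum_add_distrib, hN.row_sum] using hMN.row_sum i
  col_sum j := by simpa [sum_add_distrib, hN.col_sum] using hMN.col_sum j

theorem apply_le_toNat (hM : HasLineSums E r M) (i j : ι) : M i j ≤ r.toNat := by
  have hle : (M i j : ℤ) ≤ r := hM.row_sum i ▸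
    single_le_sum (f := fun j => (M i j : ℤ)) (fun _ _ => by positivity) (mem_univ j)
  omega

theorem nonneg [Nonempty ι] (hM : HasLineSums E r M) : 0 ≤ r :=
  let ⟨i⟩ := ‹Nonempty ι›
  hM.row_sum i ▸ sum_nonneg fun _ _ => by positivity

end HasLineSums

theorem hasLineSums_offDiag_natCast {r : ℕ} {M : Matrix ι ι ℕ} :
    HasLineSums univ.offDiag r M ↔
      (∀ i, M i i = 0) ∧ (∀ i, ∑ j, M i j = r) ∧ ∀ j, ∑ i, M i j = r := by
  refine ⟨fun h => ⟨fun i => ?_, fun i => ?_, fun j => ?_⟩, fun ⟨hdiag, hrow, hcol⟩ =>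
    ⟨fun i j hij => ?_, fun i => ?_, fun j => ?_⟩⟩
  · by_contra hne
    simpa using h.mem_of_ne_zero hne
  · exact_mod_cast h.row_sum i
  · exact_mod_cast h.col_sum j
  · suffices i ≠ j by simpa
    rintro rfl
    exact hij (hdiag i)
  · exact_mod_cast hrow i
  · exact_mod_cast hcol j

theorem finite_setOf_hasLineSums (E : Finset (ι × ι)) (r : ℤ) :
    {M | HasLineSums E r M}.Finite := by
  classical
  refine (Set.finite_Icc (0 : ι → ι → ℕ) fun _ _ => r.toNat).subset fun M hM => ?_
  exact ⟨fun i j => Nat.zero_le _, fun i j => hM.apply_le_toNat i j⟩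

/-- The finite set of nonnegative integer matrices supported in `E` with all line sums `r`. -/
noncomputable def lineSumMatrices (E : Finset (ι × ι)) (r : ℤ) : Finset (Matrix ι ι ℕ) :=
  (finite_setOf_hasLineSums E r).toFinset

@[simp]
theorem mem_lineSumMatrices {E : Finset (ι × ι)} {r : ℤ} {M : Matrix ι ι ℕ} :
    M ∈ lineSumMatrices E r ↔ HasLineSums E r M := by
  simp [lineSumMatrices]

/-- The number of matrices supported in `E` with all line sums `r`, as a rational-valued function
of the integer `r`, so that it can be compared with rational polynomials. -/
noncomputable def lineSumCount (E : Finset (ι × ι)) (r : ℤ) : ℚ :=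
  #(lineSumMatrices E r)

theorem lineSumCount_of_neg [Nonempty ι] (E : Finset (ι × ι)) {r : ℤ} (hr : r < 0) :
    lineSumCount E r = 0 := by
  have hempty : lineSumMatrices E r = ∅ :=
    eq_empty_of_forall_notMem fun M hM => (mem_lineSumMatrices.1 hM).nonneg.not_gt hr
  rw [lineSumCount, hempty, card_empty, Nat.cast_zero]

variable [DecidableEq ι]

theorem hasLineSums_sdiff {E U : Finset (ι × ι)} {r : ℤ} {M : Matrix ι ι ℕ} :
    HasLineSums (E \ U) r M ↔ HasLineSums E r M ∧ ∀ e ∈ U, M e.1 e.2 = 0 := by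
  refine ⟨fun h => ⟨⟨fun i j hij => (mem_sdiff.1 (h.mem_of_ne_zero hij)).1, h.row_sum, h.col_sum⟩,
    fun e he => ?_⟩, fun ⟨h, hU⟩ => ⟨fun i j hij => ?_, h.row_sum, h.col_sum⟩⟩
  · by_contra hne
    exact (mem_sdiff.1 (h.mem_of_ne_zero hne)).2 he
  · exact mem_sdiff.2 ⟨h.mem_of_ne_zero hij, fun hmem => hij (hU (i, j) hmem)⟩

/-- The graph of a permutation, as a set of matrix positions. -/
def permGraph (σ : Equiv.Perm ι) : Finset (ι × ι) :=
  {e | σ e.1 = e.2}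

@[simp]
theorem mem_permGraph {σ : Equiv.Perm ι} {e : ι × ι} : e ∈ permGraph σ ↔ σ e.1 = e.2 := by
  simp [permGraph]

theorem permMatrix_apply {R : Type*} [Zero R] [One R] (σ : Equiv.Perm ι) (i j : ι) :
    σ.permMatrix R i j = if (i, j) ∈ permGraph σ then 1 else 0 := by
  simp [Equiv.Perm.permMatrix, PEquiv.toMatrix_apply, eq_comm]

theorem hasLineSums_permMatrix {E : Finset (ι × ι)} {σ : Equiv.Perm ι} (hσ : permGraph σ ⊆ E) :
    HasLineSums E 1 (σ.permMatrix ℕ) where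
  mem_of_ne_zero i j h := hσ <| by simpa [permMatrix_apply] using h
  row_sum i := mod_cast sum_row_of_mem_doublyStochastic permMatrix_mem_doublyStochastic i
  col_sum j := mod_cast sum_col_of_mem_doublyStochastic permMatrix_mem_doublyStochastic j

theorem HasLineSums.exists_permGraph_subset {E : Finset (ι × ι)} {r : ℤ} {M : Matrix ι ι ℕ}
    (hM : HasLineSums E r M) (hr : 0 < r) : ∃ σ : Equiv.Perm ι, permGraph σ ⊆ E := by
  have hr_ne : (r : ℚ) ≠ 0 := by exact_mod_cast hr.ne'
  let D : Matrix ι ι ℚ := fun i j => M i j / r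
  have hD : D ∈ doublyStochastic ℚ ι := by
    refine mem_doublyStochastic_iff_sum.2 ⟨fun i j => by positivity, fun i => ?_, fun j => ?_⟩
    · rw [← sum_div, div_eq_one_iff_eq hr_ne]
      exact_mod_cast hM.row_sum i
    · rw [← sum_div, div_eq_one_iff_eq hr_ne]
      exact_mod_cast hM.col_sum j
  obtain ⟨w, hw_nonneg, hw_sum, hw⟩ := exists_eq_sum_perm_of_mem_doublyStochastic hD
  obtain ⟨σ, -, hσ⟩ : ∃ σ ∈ univ, 0 < w σ := exists_lt_of_sum_lt (by simp [hw_sum])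
  refine ⟨σ, fun ⟨i, j⟩ hij => hM.mem_of_ne_zero fun hzero => ?_⟩
  have hle : w σ ≤ D i j := by
    calc w σ = (w σ • σ.permMatrix ℚ) i j := by
          rw [Matrix.smul_apply, permMatrix_apply, if_pos hij, smul_eq_mul, mul_one]
      _ ≤ ∑ τ, (w τ • τ.permMatrix ℚ) i j :=
          single_le_sum (f := fun τ => (w τ • τ.permMatrix ℚ) i j)
            (fun τ _ => mul_nonneg (hw_nonneg τ)
              (nonneg_of_mem_doublyStochastic permMatrix_mem_doublyStochastic)) (mem_univ σ)
      _ = D i j := by rw [← hw, Matrix.sum_apply]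
  exact hσ.not_ge (by simpa [D, hzero] using hle)

theorem card_filter_lineSumMatrices_add_one {E : Finset (ι × ι)} {σ : Equiv.Perm ι}
    (hσ : permGraph σ ⊆ E) (r : ℤ) :
    #{M ∈ lineSumMatrices E (r + 1) | ∀ e ∈ permGraph σ, M e.1 e.2 ≠ 0} =
      #(lineSumMatrices E r) := by
  symm
  have hperm := hasLineSums_permMatrix hσ
  refine card_bij (fun M _ => M + σ.permMatrix ℕ) (fun M hM => ?_)
    (fun _ _ _ _ h => add_right_cancel h) (fun M hM => ?_)
  · rw [mem_lineSumMatrices] at hM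
    refine mem_filter.2 ⟨mem_lineSumMatrices.2 (hM.add hperm), fun e he => ?_⟩
    rw [Matrix.add_apply, permMatrix_apply, if_pos he]
    exact Nat.succ_ne_zero _
  · obtain ⟨hM, hne⟩ := mem_filter.1 hM
    have hadd : (M - σ.permMatrix ℕ) + σ.permMatrix ℕ = M := by
      ext i j
      refine Nat.sub_add_cancel ?_
      rw [permMatrix_apply]
      split_ifs with hij
      exacts [Nat.one_le_iff_ne_zero.2 (hne _ hij), Nat.zero_le _]
    rw [mem_lineSumMatrices, ← hadd] at hM
    exact ⟨_, mem_lineSumMatrices.2 (hM.of_add hperm), hadd⟩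

theorem biUnion_lineSumMatrices_sdiff_singleton (E G : Finset (ι × ι)) (r : ℤ) :
    (G.biUnion fun e => lineSumMatrices (E \ {e}) r) =
      {M ∈ lineSumMatrices E r | ¬ ∀ e ∈ G, M e.1 e.2 ≠ 0} := by
  ext M
  simp only [mem_biUnion, mem_filter, mem_lineSumMatrices, hasLineSums_sdiff, mem_singleton,
    forall_eq, not_forall, not_not]
  exact ⟨fun ⟨e, he, hM, hzero⟩ => ⟨hM, e, he, hzero⟩, fun ⟨hM, e, he, hzero⟩ => ⟨e, he, hM, hzero⟩⟩

theorem inf'_lineSumMatrices_sdiff_singleton (E : Finset (ι × ι)) {U : Finset (ι × ι)}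
    (hU : U.Nonempty) (r : ℤ) :
    (U.inf' hU fun e => lineSumMatrices (E \ {e}) r) = lineSumMatrices (E \ U) r := by
  ext M
  simp only [mem_inf', mem_lineSumMatrices, hasLineSums_sdiff, mem_singleton, forall_eq]
  obtain ⟨e, he⟩ := hU
  exact ⟨fun h => ⟨(h e he).1, fun d hd => (h d hd).2⟩, fun h d hd => ⟨h.1, h.2 d hd⟩⟩

theorem fwdDiff_lineSumCount {E : Finset (ι × ι)} {σ : Equiv.Perm ι} (hσ : permGraph σ ⊆ E)
    (r : ℤ) :
    fwdDiff 1 (lineSumCount E) r =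
      ∑ U ∈ (permGraph σ).powerset with U.Nonempty,
        (-1) ^ (#U + 1) * lineSumCount (E \ U) (r + 1) := by
  have hcard := card_filter_add_card_filter_not (s := lineSumMatrices E (r + 1))
    (fun M => ∀ e ∈ permGraph σ, M e.1 e.2 ≠ 0)
  rw [card_filter_lineSumMatrices_add_one hσ, ← biUnion_lineSumMatrices_sdiff_singleton] at hcard
  have hincl := inclusion_exclusion_card_biUnion (permGraph σ)
    fun e => lineSumMatrices (E \ {e}) (r + 1)
  simp only [inf'_lineSumMatrices_sdiff_singleton] at hincl
  rw [sum_coe_sort (filter Finset.Nonempty (permGraph σ).powerset) fun U =>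
    (-1 : ℤ) ^ (#U + 1) * #(lineSumMatrices (E \ U) (r + 1))] at hincl
  simp only [fwdDiff, lineSumCount]
  rw [← hcard, Nat.cast_add, add_sub_cancel_left]
  exact_mod_cast congrArg (Int.cast : ℤ → ℚ) hincl

theorem lineSumCount_mem_polynomialFrom_of_permGraph_subset {E : Finset (ι × ι)}
    {σ : Equiv.Perm ι} (hσ : permGraph σ ⊆ E) {a : ℤ}
    (hE : ∀ U ⊆ permGraph σ, U.Nonempty → lineSumCount (E \ U) ∈ polynomialFrom ℚ (a + 1)) :
    lineSumCount E ∈ polynomialFrom ℚ a := by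
  apply mem_polynomialFrom_of_fwdDiff
  have hsum : fwdDiff 1 (lineSumCount E) = ∑ U ∈ (permGraph σ).powerset with U.Nonempty,
      (-1 : ℚ) ^ (#U + 1) • fun r => lineSumCount (E \ U) (r + 1) := by
    ext r
    simp [fwdDiff_lineSumCount hσ]
  rw [hsum]
  refine Submodule.sum_mem _ fun U hU => Submodule.smul_mem _ _ ?_
  obtain ⟨hUσ, hne⟩ := mem_filter.1 hU
  exact comp_add_one_mem_polynomialFrom (hE U (mem_powerset.1 hUσ) hne)

omit [DecidableEq ι] in
theorem lineSumCount_mem_polynomialFrom_one (E : Finset (ι × ι)) :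
    lineSumCount E ∈ polynomialFrom ℚ 1 := by
  classical
  induction E using Finset.strongInduction with
  | H E ih =>
    by_cases hE : ∃ σ : Equiv.Perm ι, permGraph σ ⊆ E
    · obtain ⟨σ, hσ⟩ := hE
      refine polynomialFrom_mono zero_le_one <|
        lineSumCount_mem_polynomialFrom_of_permGraph_subset hσ fun U hU hne => ?_
      simpa using ih _ (sdiff_ssubset (hU.trans hσ) hne)
    · refine ⟨0, fun r hr => ?_⟩
      have hempty : lineSumMatrices E r = ∅ := eq_empty_of_forall_notMem fun M hM =>
        hE ((mem_lineSumMatrices.1 hM).exists_permGraph_subset (by omega))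
      simp [lineSumCount, hempty]

theorem lineSumCount_mem_polynomialFrom {κ : Type*} {J : Finset κ} {σ : κ → Equiv.Perm ι}
    (hdisj : (J : Set κ).PairwiseDisjoint fun a => permGraph (σ a)) {E : Finset (ι × ι)}
    (hE : ∀ a ∈ J, permGraph (σ a) ⊆ E) :
    lineSumCount E ∈ polynomialFrom ℚ (1 - #J) := by
  induction J using Finset.cons_induction generalizing E with
  | empty => simpa using lineSumCount_mem_polynomialFrom_one E
  | cons a J ha ih =>
    rw [coe_cons, Set.pairwiseDisjoint_insert_of_notMem (by simpa using ha)] at hdisj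
    rw [forall_mem_cons] at hE
    refine lineSumCount_mem_polynomialFrom_of_permGraph_subset hE.1 fun U hU _ => ?_
    have hrest : ∀ b ∈ J, permGraph (σ b) ⊆ E \ U := fun b hb =>
      subset_sdiff.2 ⟨hE.2 b hb, (hdisj.2 b hb).symm.mono_right hU⟩
    convert ih hdisj.1 hrest using 1
    rw [card_cons]
    push_cast
    ring_nf

end LineSums

theorem S_polynomial_roots_general {ι κ : Type*} [Fintype ι] [DecidableEq ι] [Nonempty ι]
    {E : Finset (ι × ι)} {J : Finset κ} {σ : κ → Equiv.Perm ι}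
    (hdisj : (J : Set κ).PairwiseDisjoint fun a => permGraph (σ a))
    (hE : ∀ a ∈ J, permGraph (σ a) ⊆ E) {P : ℚ[X]}
    (hP : ∀ r : ℕ, P.eval (r : ℚ) = lineSumCount E r) {k : ℤ} (hk : 1 ≤ k) (hkJ : k < #J) :
    P.eval (-(k : ℚ)) = 0 := by
  rw [← Int.cast_neg,
    eval_eq_of_mem_polynomialFrom (lineSumCount_mem_polynomialFrom hdisj hE) hP (by omega),
    lineSumCount_of_neg E (by omega)]

theorem lineSumCount_offDiag (n r : ℕ) :
    lineSumCount (univ.offDiag : Finset (Fin n × Fin n)) r = S n r := by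
  rw [lineSumCount, S, Nat.subtype_card (lineSumMatrices univ.offDiag r) fun M => by
    rw [mem_lineSumMatrices, hasLineSums_offDiag_natCast]]

theorem pairwiseDisjoint_permGraph_addRight {G : Type*} [AddGroup G] [Fintype G] [DecidableEq G]
    (A : Set G) : A.PairwiseDisjoint fun a => permGraph (Equiv.addRight a) := by
  intro a _ b _ hab
  refine disjoint_left.2 fun e ha hb => hab ?_
  rw [mem_permGraph, Equiv.coe_addRight] at ha hb
  exact add_left_cancel (ha.trans hb.symm)

theorem permGraph_addRight_subset_offDiag {G : Type*} [AddGroup G] [Fintype G] [DecidableEq G]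
    {a : G} (ha : a ≠ 0) : permGraph (Equiv.addRight a) ⊆ univ.offDiag := by
  intro e he
  rw [mem_permGraph, Equiv.coe_addRight] at he
  simpa [mem_offDiag, ← he] using ha

theorem S_polynomial_roots (n : ℕ) (hn : 3 ≤ n) (P : Polynomial ℚ)
    (hP : ∀ r : ℕ, P.eval (r : ℚ) = S n r) :
    ∀ k : ℤ, 1 ≤ k → k ≤ (n : ℤ) - 2 → P.eval (-(k : ℚ)) = 0 := by
  intro k hk hkn
  have : NeZero n := ⟨by omega⟩
  have hcard : #(univ.erase (0 : Fin n)) = n - 1 := by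
    rw [card_erase_of_mem (mem_univ _), card_fin]
  exact S_polynomial_roots_general (J := univ.erase 0)
    (pairwiseDisjoint_permGraph_addRight _)
    (fun a ha => permGraph_addRight_subset_offDiag (ne_of_mem_erase ha))
    (fun r => (hP r).trans (lineSumCount_offDiag n r).symm) hk (by omega)
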